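/- Let R be a symmetric quantum nilpotent algebra of dimension N and let τ ∈ Ξ_N. Then R has the presentation R = K[x_{τ(1)}][x_{τ(2)}; σ''_{τ(2)}, δ''_{τ(2)}]⋯[x_{τ(N)}; σ''_{τ(N)}, δ''_{τ(N)}], where σ''_{τ(k)} := σ_{τ(k)} and δ''_{τ(k)} := δ_{τ(k)} if τ(k) = max τ([1,k−1]) + 1, while σ''_{τ(k)} := σ*_{τ(k)} and δ''_{τ(k)} := δ*_{τ(k)} if τ(k) = min τ([1,k−1]) − 1; and this presentation satisfies the quantum nilpotent algebra axioms (a)–(c) for the elements h''_{τ(k)} ∈ H given by h''_{τ(k)} := h_{τ(k)} in the first case and h''_{τ(k)} := h*_{τ(k)} in the second case. -/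

import Mathlib

open scoped BigOperators

noncomputable section

universe u v

/-- The group of `K`-points of a split torus of rank `r`. -/
abbrev Torus (K : Type u) [Field K] (r : ℕ) : Type u := Fin r → Kˣ

section Core

variable (K : Type u) [Field K] {R : Type v} [Ring R] [Algebra K R] {r N : ℕ}

/-- `a` is an eigenvector of the torus action `act` with (integral) character `f`. -/
def IsEigenWith (act : Torus K r →* (R ≃ₐ[K] R)) (f : Fin r → ℤ) (a : R) : Prop :=
  ∀ ξ : Torus K r, act ξ a = ((∏ i, ξ i ^ f i : Kˣ) : K) • a

/-- The torus action `act` is rational: every element is a finite sum of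
eigenvectors whose eigenvalues are given by integral characters of the torus. -/
def IsRationalAction (act : Torus K r →* (R ≃ₐ[K] R)) : Prop :=
  ∀ a : R, ∃ (s : Finset (Fin r → ℤ)) (c : (Fin r → ℤ) → R),
    a = ∑ f ∈ s, c f ∧ ∀ f ∈ s, IsEigenWith K act f (c f)

/-- The ordered monomial `x 0 ^ m 0 * x 1 ^ m 1 * ⋯ * x (N-1) ^ m (N-1)`. -/
def ordMonomial (x : Fin N → R) (m : Fin N → ℕ) : R :=
  ((List.finRange N).map fun k => x k ^ m k).prod

/-- The ordered monomial in the reversed order of the generators. -/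
def revOrdMonomial (x : Fin N → R) (m : Fin N → ℕ) : R :=
  ((List.finRange N).reverse.map fun k => x k ^ m k).prod

/-- The subalgebra generated by the first `m` of the elements `x 0, …, x (N-1)`. -/
def Rsub (x : Fin N → R) (m : ℕ) : Subalgebra K R :=
  Algebra.adjoin K (x '' {l : Fin N | (l : ℕ) < m})

/-- The subalgebra generated by the elements `x l` with `m < l` (for the reversed order). -/
def RsubRev (x : Fin N → R) (m : ℕ) : Subalgebra K R :=
  Algebra.adjoin K (x '' {l : Fin N | m < (l : ℕ)})

/-- The skew derivation `δ_k : a ↦ x_k a − (h_k · a) x_k` attached to the `k`-th generator. -/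
def skewDelta (act : Torus K r →* (R ≃ₐ[K] R)) (x : Fin N → R) (h : Fin N → Torus K r)
    (k : Fin N) : R → R :=
  fun a => x k * a - act (h k) a * x k

end Core

/-- A quantum nilpotent algebra (CGL extension) of dimension `N`:  an iterated skew
polynomial extension `R = K[x_1][x_2; σ_2, δ_2]⋯[x_N; σ_N, δ_N]` equipped with a rational
action of a torus `H = (Kˣ)^r` by `K`-algebra automorphisms such that the `x_k` are
`H`-eigenvectors, each `δ_k` is a locally nilpotent `σ_k`-derivation of the subalgebra
generated by `x_1, …, x_{k-1}`, and each `σ_k` is given by the action of a torus element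
`h_k` whose eigenvalue `λ_k` on `x_k` is not a root of unity.  The iterated skew polynomial
presentation is encoded by the generation, linear independence of ordered monomials
(PBW basis) and the skew commutation conditions. -/
structure QNA (K : Type u) [Field K] (R : Type v) [Ring R] [Algebra K R] (N r : ℕ) where
  x : Fin N → R
  act : Torus K r →* (R ≃ₐ[K] R)
  h : Fin N → Torus K r
  lam : Fin N → K
  rational : IsRationalAction K act
  gen : Algebra.adjoin K (Set.range x) = ⊤
  pbw : LinearIndependent K (ordMonomial (R := R) x)
  eigenvec : ∀ k : Fin N, ∃ f : Fin r → ℤ, IsEigenWith K act f (x k)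
  stable : ∀ k : Fin N, ∀ a ∈ Rsub K x (k : ℕ), skewDelta K act x h k a ∈ Rsub K x (k : ℕ)
  locnil : ∀ k : Fin N, ∀ a ∈ Rsub K x (k : ℕ), ∃ n : ℕ, (skewDelta K act x h k)^[n] a = 0
  hx : ∀ k, act (h k) (x k) = lam k • x k
  lam_not_root : ∀ k, ∀ n : ℕ, n ≠ 0 → lam k ^ n ≠ 1

/-- A symmetric quantum nilpotent algebra: a quantum nilpotent algebra which admits an
iterated skew polynomial presentation, satisfying the same axioms, also for the reversed
order `x_N, x_{N-1}, …, x_1` of the generators, with respect to torus elements `h*_k`. -/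
structure SymQNA (K : Type u) [Field K] (R : Type v) [Ring R] [Algebra K R] (N r : ℕ)
    extends QNA K R N r where
  hstar : Fin N → Torus K r
  lamstar : Fin N → K
  pbwRev : LinearIndependent K (revOrdMonomial (R := R) x)
  stableRev : ∀ k : Fin N, ∀ a ∈ RsubRev K x (k : ℕ),
    skewDelta K act x hstar k a ∈ RsubRev K x (k : ℕ)
  locnilRev : ∀ k : Fin N, ∀ a ∈ RsubRev K x (k : ℕ),
    ∃ n : ℕ, (skewDelta K act x hstar k)^[n] a = 0
  hxstar : ∀ k, act (hstar k) (x k) = lamstar k • x k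
  lamstar_not_root : ∀ k, ∀ n : ℕ, n ≠ 0 → lamstar k ^ n ≠ 1

section Prime

variable (K : Type u) [Field K] {R : Type v} [Ring R] [Algebra K R] {r N : ℕ}

/-- The skew derivation `δ_k` of the `k`-th step of the presentation vanishes. -/
def deltaZero (Q : QNA K R N r) (k : Fin N) : Prop :=
  ∀ a ∈ Rsub K Q.x (k : ℕ), skewDelta K Q.act Q.x Q.h k a = 0

/-- `p` is a prime element of the subalgebra `A`:  `p` is a nonzero noninvertible normal
element of `A` (`pA = Ap`) such that `A/Ap` is a domain. -/
def IsPrimeIn (A : Subalgebra K R) (p : R) : Prop :=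
  p ∈ A ∧ p ≠ 0 ∧ (¬ ∃ u ∈ A, p * u = 1 ∧ u * p = 1) ∧
  (∀ a ∈ A, ∃ b ∈ A, a * p = p * b) ∧
  (∀ a ∈ A, ∃ b ∈ A, p * a = b * p) ∧
  (∀ a ∈ A, ∀ b ∈ A, (∃ d ∈ A, a * b = p * d) → (∃ d ∈ A, a = p * d) ∨ (∃ d ∈ A, b = p * d))

/-- The predecessor function of the level sets of `η`:  `p(k)` is the largest `l < k`
with `η l = η k`, and `⊥` (i.e. `−∞`) if there is no such `l`. -/
def predIdx {α : Type*} [DecidableEq α] (η : Fin N → α) (k : Fin N) : WithBot (Fin N) :=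
  (Finset.univ.filter fun l => l < k ∧ η l = η k).max

/-- The successor function of the level sets of `η`:  `s(k)` is the smallest `l > k`
with `η l = η k`, and `⊤` (i.e. `+∞`) if there is no such `l`. -/
def succIdx {α : Type*} [DecidableEq α] (η : Fin N → α) (k : Fin N) : WithTop (Fin N) :=
  (Finset.univ.filter fun l => k < l ∧ η l = η k).min

/-- `(η, c, y)` is a sequence of homogeneous prime elements for the quantum nilpotent
algebra `Q` in the sense of the prime element theorem:  `y` is defined by the recursion
`y_k = y_{p(k)} x_k − c_k` (if `δ_k ≠ 0`; `y_k = x_k` if `δ_k = 0`), the `y_k` are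
`H`-eigenvectors, and for every `k` the homogeneous prime elements of the subalgebra
`R_k` generated by `x_1, …, x_k` are precisely the nonzero scalar multiples of the
`y_l` with `l ≤ k` and `s(l) > k`. -/
structure IsPrimeSeq (Q : QNA K R N r) (η : Fin N → ℤ) (c : Fin N → R) (y : Fin N → R) :
    Prop where
  c_mem : ∀ k : Fin N, ¬ deltaZero K Q k → c k ∈ Rsub K Q.x (k : ℕ)
  rec_delta_zero : ∀ k : Fin N, deltaZero K Q k → y k = Q.x k
  rec_delta_ne : ∀ k : Fin N, ¬ deltaZero K Q k →
    y k = (WithBot.recBotCoe (1 : R) (fun l => y l) (predIdx η k)) * Q.x k - c k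
  homog : ∀ k : Fin N, ∃ f : Fin r → ℤ, IsEigenWith K Q.act f (y k)
  prime_iff : ∀ k : Fin N, ∀ u : R,
    (IsPrimeIn K (Rsub K Q.x ((k : ℕ) + 1)) u ∧ ∃ f : Fin r → ℤ, IsEigenWith K Q.act f u) ↔
    (∃ l : Fin N, l ≤ k ∧ (∀ l' : Fin N, l < l' → l' ≤ k → η l' ≠ η l) ∧
      ∃ t : Kˣ, u = (t : K) • y l)

/-- The vector `ē_k = e_k + e_{p(k)} + e_{p²(k)} + ⋯ ∈ ℤ^N`. -/
def ebar (η : Fin N → ℤ) (k : Fin N) : Fin N → ℤ :=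
  fun l => if l ≤ k ∧ η l = η k then 1 else 0

/-- The multiplicatively skewsymmetric matrix of eigenvalues:  `1` on the diagonal,
`λ_{kl}` below it and `λ_{lk}⁻¹` above it. -/
def omegaEntry (lam2 : Fin N → Fin N → Kˣ) (k l : Fin N) : Kˣ :=
  if k = l then 1 else if l < k then lam2 k l else (lam2 l k)⁻¹

/-- The unique group bicharacter `Ω : ℤ^N × ℤ^N → Kˣ` with `Ω(e_k, e_l)` equal to `1`,
`λ_{kl}`, `λ_{lk}⁻¹` according as `k = l`, `k > l`, `k < l`. -/
def Omega (lam2 : Fin N → Fin N → Kˣ) (f g : Fin N → ℤ) : Kˣ :=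
  ∏ k, ∏ l, (omegaEntry K lam2 k l) ^ (f k * g l)

/-- The set of exchangeable indices: those `k` with `s(k) ≠ +∞`. -/
def exSet (η : Fin N → ℤ) : Finset (Fin N) :=
  Finset.univ.filter fun k => ∃ l, k < l ∧ η l = η k

/-- Condition (A): `K` contains square roots of the scalars `λ_{kl}` such that the
subgroup of `Kˣ` generated by all of them contains no elements of order 2. -/
def CondA (lam2 : Fin N → Fin N → Kˣ) : Prop :=
  ∃ sq : Fin N → Fin N → Kˣ, (∀ k l : Fin N, l < k → sq k l ^ 2 = lam2 k l) ∧
    ∀ g ∈ Subgroup.closure {u : Kˣ | ∃ k l : Fin N, l < k ∧ u = sq k l}, g ^ 2 = 1 → g = 1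

/-- Condition (B): there exist positive integers `d_n`, `n ∈ range η`, such that
`(λ*_k)^{d_{η(l)}} = (λ*_l)^{d_{η(k)}}` for all exchangeable `k, l`. -/
def CondB (η : Fin N → ℤ) (lamstar : Fin N → K) : Prop :=
  ∃ d : ℤ → ℕ, (∀ n ∈ Set.range η, 0 < d n) ∧
    ∀ k ∈ exSet η, ∀ l ∈ exSet η, lamstar k ^ d (η l) = lamstar l ^ d (η k)

/-- The defining conditions for the exchange matrix `B̃ ∈ M_{N×ex}(ℤ)`:  columns indexed
outside `ex` vanish; `Ω(Σ_l b_{lk} ē_l, ē_n)` equals `λ*_n` for `k = n` and `1` otherwise;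
and the products `y_1^{b_{1k}} ⋯ y_N^{b_{Nk}}` are fixed under `H`, i.e. the characters
`χ_{y_l}` of the `y_l` satisfy `Σ_l b_{lk} χ_{y_l} = 0`. -/
def IsExchangeMatrix (lam2 : Fin N → Fin N → Kˣ) (η : Fin N → ℤ) (lamstar : Fin N → K)
    (chiy : Fin N → Fin r → ℤ) (B : Fin N → Fin N → ℤ) : Prop :=
  (∀ k : Fin N, k ∉ exSet η → ∀ l, B l k = 0) ∧
  (∀ k ∈ exSet η, ∀ n : Fin N,
    ((Omega K lam2 (fun j => ∑ l, B l k * ebar η l j) (ebar η n) : Kˣ) : K) =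
      (if k = n then lamstar n else 1)) ∧
  (∀ k ∈ exSet η, ∀ i : Fin r, (∑ l, B l k * chiy l i) = 0)

/-- `ι : R →ₐ[K] D` realizes the division ring `D` as the division ring of fractions
`Fract R`:  `ι` is injective and every element of `D` is a right fraction `ι(a) ι(b)⁻¹`. -/
def IsFractionEmb {D : Type v} [DivisionRing D] [Algebra K D] (ι : R →ₐ[K] D) : Prop :=
  Function.Injective ι ∧ ∀ d : D, ∃ a b : R, b ≠ 0 ∧ d * ι b = ι a

end Prime
/-- The subset `Ξ_N ⊆ S_N` of permutations `τ` such that `τ([1,k])` is an interval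
for all `k`; equivalently, for each `k ≥ 2` either `τ(k) = max τ([1,k-1]) + 1` or
`τ(k) = min τ([1,k-1]) − 1`. -/
def InXi {N : ℕ} (τ : Equiv.Perm (Fin N)) : Prop :=
  ∀ k a b : Fin N, a ≤ k → b ≤ k → ∀ j : Fin N, τ a ≤ j → j ≤ τ b →
    ∃ c : Fin N, c ≤ k ∧ τ c = j

/-- For `τ ∈ Ξ_N` and `2 ≤ k`, `τ(k) = max τ([1,k-1]) + 1` (case (1) of the text). -/
def XiCaseMax {N : ℕ} (τ : Equiv.Perm (Fin N)) (k : Fin N) : Prop :=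
  ∀ l : Fin N, l < k → τ l < τ k

/-! Because the ordered monomials form a basis that is compatible both with the initial subalgebras
(going up) and with the final subalgebras (going down), a relation between `x_k` and `x_l`, `l < k`,
can be expanded in two ways. Up to a scalar multiple of `x_l x_k`, the elements
`χ (x_k x_l - (h_k · x_l) x_k)` and `-(x_l x_k - (h*_l · x_k) x_l)` agree for a suitable `χ ≠ 0`.
The former only involves generators before `x_k`, the latter only generators after `x_l`. Hence
`δ_k (x_l)` lies in the subalgebra generated by the `x_j` with `l < j < k`. Consequently `δ_k`
preserves the subalgebra generated by any interval of generators ending just before `x_k`; this is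
the skew derivation axiom at a step of `τ` that appends a new maximum. Local nilpotency and the
freeness of the powers of `x_k` are inherited from the larger subalgebra generated by all
`x_j`, `j < k`. Reversing the order of the generators turns the steps that prepend a new minimum
into steps that append a new maximum.
-/

section Algebra

variable {F A : Type*} [CommSemiring F] [Semiring A] [Algebra F A]

theorem adjoin_le_of_mul_mem_left {s : Set A} {W : Submodule F A} (one_mem : 1 ∈ W)
    (mul_mem : ∀ t ∈ s, ∀ w ∈ W, t * w ∈ W) : Subalgebra.toSubmodule (Algebra.adjoin F s) ≤ W := by
  rw [Algebra.adjoin_eq_span, Submodule.span_le]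
  intro z hz
  induction hz using Submonoid.closure_induction_left with
  | one => exact one_mem
  | mul_left t ht w _ hw => exact mul_mem t ht w hw

theorem adjoin_le_of_mul_mem_right {s : Set A} {W : Submodule F A} (one_mem : 1 ∈ W)
    (mul_mem : ∀ t ∈ s, ∀ w ∈ W, w * t ∈ W) : Subalgebra.toSubmodule (Algebra.adjoin F s) ≤ W := by
  rw [Algebra.adjoin_eq_span, Submodule.span_le]
  intro z hz
  induction hz using Submonoid.closure_induction_right with
  | one => exact one_mem
  | mul_right w _ t ht hw => exact mul_mem t ht w hw

theorem adjoin_insert_le_adjoin_mul_adjoin_singleton {s : Set A} {y : A}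
    (hy : ∀ a ∈ Algebra.adjoin F s, y * a ∈
      Subalgebra.toSubmodule (Algebra.adjoin F s) * Subalgebra.toSubmodule (Algebra.adjoin F {y})) :
    Subalgebra.toSubmodule (Algebra.adjoin F (insert y s)) ≤
      Subalgebra.toSubmodule (Algebra.adjoin F s) *
        Subalgebra.toSubmodule (Algebra.adjoin F {y}) := by
  refine adjoin_le_of_mul_mem_left ?_ fun t ht w hw => ?_
  · exact one_mul (1 : A) ▸ Submodule.mul_mem_mul (Algebra.adjoin F s).one_mem
      (Algebra.adjoin F {y}).one_mem
  induction hw using Submodule.mul_induction_on' with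
  | mem_mul_mem a ha p hp =>
    rw [← mul_assoc]
    rcases ht with rfl | ht
    · rw [← (Subalgebra.isIdempotentElem_toSubmodule (Algebra.adjoin F {t})).eq, ← mul_assoc]
      exact Submodule.mul_mem_mul (hy a ha) hp
    · exact Submodule.mul_mem_mul
        ((Algebra.adjoin F s).mul_mem (Algebra.subset_adjoin ht) ha) hp
  | add v _ w _ hv hw => rw [mul_add]; exact add_mem hv hw

theorem adjoin_insert_le_adjoin_singleton_mul_adjoin {s : Set A} {y : A}
    (hy : ∀ a ∈ Algebra.adjoin F s, a * y ∈
      Subalgebra.toSubmodule (Algebra.adjoin F {y}) * Subalgebra.toSubmodule (Algebra.adjoin F s)) :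
    Subalgebra.toSubmodule (Algebra.adjoin F (insert y s)) ≤
      Subalgebra.toSubmodule (Algebra.adjoin F {y}) *
        Subalgebra.toSubmodule (Algebra.adjoin F s) := by
  refine adjoin_le_of_mul_mem_right ?_ fun t ht w hw => ?_
  · exact one_mul (1 : A) ▸ Submodule.mul_mem_mul (Algebra.adjoin F {y}).one_mem
      (Algebra.adjoin F s).one_mem
  induction hw using Submodule.mul_induction_on' with
  | mem_mul_mem p hp a ha =>
    rw [mul_assoc]
    rcases ht with rfl | ht
    · rw [← (Subalgebra.isIdempotentElem_toSubmodule (Algebra.adjoin F {t})).eq, mul_assoc]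
      exact Submodule.mul_mem_mul hp (hy a ha)
    · exact Submodule.mul_mem_mul hp
        ((Algebra.adjoin F s).mul_mem ha (Algebra.subset_adjoin ht))
  | add v _ w _ hv hw => rw [add_mul]; exact add_mem hv hw

end Algebra

section SkewDerivation

variable {F A : Type*} [CommRing F] [Ring A] [Algebra F A]

theorem mul_sub_map_mul_mem_adjoin {σ : A →ₐ[F] A} {s : Set A} {y : A}
    (hσ : ∀ a ∈ Algebra.adjoin F s, σ a ∈ Algebra.adjoin F s)
    (hs : ∀ t ∈ s, y * t - σ t * y ∈ Algebra.adjoin F s) {a : A} (ha : a ∈ Algebra.adjoin F s) :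
    y * a - σ a * y ∈ Algebra.adjoin F s := by
  induction ha using Algebra.adjoin_induction with
  | mem t ht => exact hs t ht
  | algebraMap c =>
    rw [AlgHom.commutes, Algebra.commutes, sub_self]
    exact zero_mem _
  | add a b _ _ ha hb =>
    have additive : y * (a + b) - σ (a + b) * y = (y * a - σ a * y) + (y * b - σ b * y) := by
      rw [map_add]; noncomm_ring
    rw [additive]
    exact add_mem ha hb
  | mul a b ha hb iha ihb =>
    have leibniz :
        y * (a * b) - σ (a * b) * y = (y * a - σ a * y) * b + σ a * (y * b - σ b * y) := by
      rw [map_mul]; noncomm_ring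
    rw [leibniz]
    exact add_mem (mul_mem iha hb) (mul_mem (hσ a ha) ihb)

end SkewDerivation

section LinearAlgebra

variable {F V ι κ : Type*} [Field F]

theorem span_image_inf_span_image [AddCommGroup V] [Module F V] {v : ι → V}
    (hv : LinearIndependent F v) (s t : Set ι) :
    Submodule.span F (v '' s) ⊓ Submodule.span F (v '' t) = Submodule.span F (v '' (s ∩ t)) := by
  simp only [Finsupp.span_image_eq_map_linearCombination, Finsupp.supported_inter,
    Submodule.map_inf _ hv]

theorem mem_span_image_inter_of_add_eq_smul [AddCommGroup V] [Module F V] {v : ι → V}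
    (hv : LinearIndependent F v) {s t : Set ι} {i : ι} (hi : i ∉ s ∪ t) {y z : V}
    (hy : y ∈ Submodule.span F (v '' s)) (hz : z ∈ Submodule.span F (v '' t)) {c : F}
    (h : y + z = c • v i) : y ∈ Submodule.span F (v '' (s ∩ t)) := by
  have hc : c = 0 := by
    by_contra hc
    refine hv.notMem_span_image hi ((Submodule.smul_mem_iff _ hc).1 ?_)
    rw [← h, Set.image_union, Submodule.span_union]
    exact Submodule.add_mem_sup hy hz
  rw [hc, zero_smul] at h
  rw [← span_image_inf_span_image hv, eq_neg_of_add_eq_zero_left h]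
  exact ⟨eq_neg_of_add_eq_zero_left h ▸ hy, neg_mem hz⟩

theorem linearIndependent_subalgebra_of_mul [Ring V] [Algebra F V] {S : Subalgebra F V}
    {b : ι → V} {c : κ → V} (hS : Subalgebra.toSubmodule S ≤ Submodule.span F (Set.range b))
    (hbc : LinearIndependent F fun p : ι × κ => b p.1 * c p.2) : LinearIndependent S c := by
  rw [linearIndependent_iff']
  intro s g hg n hn
  have expand : ∀ n, ∃ f : ι →₀ F, Finsupp.linearCombination F b f = g n := fun n =>
    (Finsupp.mem_span_range_iff_exists_finsupp).1 (hS (g n).2)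
  choose f hf using expand
  have term : ∀ n, Finsupp.linearCombination F (fun p : ι × κ => b p.1 * c p.2)
      ((f n).mapDomain (·, n)) = g n • c n := fun n => by
    rw [Finsupp.linearCombination_mapDomain, Subalgebra.smul_def, ← hf n, smul_eq_mul]
    simp only [Finsupp.linearCombination_apply, Finsupp.sum, Finset.sum_mul, smul_mul_assoc,
      Function.comp_apply]
  have sum_zero : ∑ n ∈ s, (f n).mapDomain (·, n) = 0 :=
    hbc (by simp only [map_sum, term, hg, map_zero])
  have f_zero : f n = 0 := by
    ext i
    have coeff := DFunLike.congr_fun sum_zero (i, n)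
    rw [Finsupp.finsetSum_apply, Finset.sum_eq_single_of_mem n hn] at coeff
    · rwa [Finsupp.mapDomain_apply (Prod.mk_left_injective n)] at coeff
    · intro n' _ hne
      exact Finsupp.mapDomain_of_notMem_range _ _
        (by rintro ⟨_, h⟩; exact hne (congrArg Prod.snd h))
  rw [← Subtype.coe_inj, ← hf n, f_zero, map_zero, ZeroMemClass.coe_zero]

end LinearAlgebra

theorem prod_map_pow_mul_prod_map_pow {M ι : Type*} [Monoid M] [LinearOrder ι] (x : ι → M)
    {L : List ι} (hL : L.Pairwise (· < ·)) {m m' : ι → ℕ}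
    (hmm' : ∀ i j, m i ≠ 0 → m' j ≠ 0 → i ≤ j) :
    (L.map fun k => x k ^ m k).prod * (L.map fun k => x k ^ m' k).prod =
      (L.map fun k => x k ^ (m + m') k).prod := by
  induction L with
  | nil => simp
  | cons a L ih =>
    rw [List.pairwise_cons] at hL
    have comm : Commute (L.map fun k => x k ^ m k).prod (x a ^ m' a) := by
      by_cases ha : m' a = 0
      · rw [ha, pow_zero]
        exact Commute.one_right _
      · have hm : ∀ j ∈ L, m j = 0 := fun j hj =>
          by_contra fun h => (hmm' j a h ha).not_gt (hL.1 j hj)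
        rw [List.prod_eq_one]
        · exact Commute.one_left _
        · simp +contextual [hm]
    simp only [List.map_cons, List.prod_cons]
    rw [mul_assoc, comm.left_comm, ih hL.2, Pi.add_apply, pow_add, mul_assoc]

section Monomials

variable {K : Type u} [Field K] {R : Type v} [Ring R] [Algebra K R] {N : ℕ}

theorem ordMonomial_mul_ordMonomial (x : Fin N → R) {m m' : Fin N → ℕ}
    (hmm' : ∀ i j, m i ≠ 0 → m' j ≠ 0 → i ≤ j) :
    ordMonomial x m * ordMonomial x m' = ordMonomial x (m + m') :=
  prod_map_pow_mul_prod_map_pow x (List.pairwise_lt_finRange N) hmm'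

theorem ordMonomial_single (x : Fin N → R) (k : Fin N) (n : ℕ) :
    ordMonomial x (Pi.single k n) = x k ^ n := by
  rw [ordMonomial, List.prod_map_eq_pow_single k,
    List.count_eq_one_of_mem (List.nodup_finRange N) (List.mem_finRange k)]
  · simp
  · intro j hj _
    simp [hj]

variable (K) in
/-- The span of the ordered monomials involving only the generators indexed by `I`. -/
def pbwSpan (x : Fin N → R) (I : Set (Fin N)) : Submodule K R :=
  Submodule.span K (ordMonomial x '' {m | Function.support m ⊆ I})

theorem one_mem_pbwSpan (x : Fin N → R) (I : Set (Fin N)) : 1 ∈ pbwSpan K x I :=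
  Submodule.subset_span ⟨0, by simp, by simp [ordMonomial]⟩

theorem pbwSpan_mul_pbwSpan_le (x : Fin N → R) {I J : Set (Fin N)}
    (hIJ : ∀ i ∈ I, ∀ j ∈ J, i ≤ j) :
    pbwSpan K x I * pbwSpan K x J ≤ pbwSpan K x (I ∪ J) := by
  rw [pbwSpan, pbwSpan, Submodule.span_mul_span, Submodule.span_le]
  rintro _ ⟨_, ⟨m, hm, rfl⟩, _, ⟨m', hm', rfl⟩, rfl⟩
  refine Submodule.subset_span ⟨m + m', ?_, (ordMonomial_mul_ordMonomial x
    fun i j hi hj => hIJ i (hm hi) j (hm' hj)).symm⟩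
  exact (Function.support_add m m').trans (Set.union_subset_union hm hm')

theorem adjoin_singleton_le_pbwSpan (x : Fin N → R) (k : Fin N) :
    Subalgebra.toSubmodule (Algebra.adjoin K {x k}) ≤ pbwSpan K x {k} := by
  rw [Algebra.adjoin_eq_span, Submodule.span_le]
  intro z hz
  obtain ⟨n, rfl⟩ := Submonoid.mem_closure_singleton.1 hz
  exact Submodule.subset_span ⟨Pi.single k n, Pi.support_single_subset, ordMonomial_single x k n⟩

theorem pbwSpan_le_adjoin (x : Fin N → R) (I : Set (Fin N)) :
    pbwSpan K x I ≤ Subalgebra.toSubmodule (Algebra.adjoin K (x '' I)) := by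
  refine Submodule.span_le.2 ?_
  rintro _ ⟨m, hm, rfl⟩
  refine Subalgebra.list_prod_mem _ fun z hz => ?_
  obtain ⟨k, _, rfl⟩ := List.mem_map.1 hz
  by_cases hk : m k = 0
  · rw [hk, pow_zero]
    exact one_mem _
  · exact pow_mem (Algebra.subset_adjoin (Set.mem_image_of_mem x (hm hk))) _

theorem mem_pbwSpan_inter_of_add_eq_smul_mul {x : Fin N → R}
    (hx : LinearIndependent K (ordMonomial x)) {I J : Set (Fin N)} {l k : Fin N} (hlk : l ≤ k)
    (hk : k ∉ I) (hl : l ∉ J) {y z : R} (hy : y ∈ pbwSpan K x I) (hz : z ∈ pbwSpan K x J) {c : K}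
    (h : y + z = c • (x l * x k)) : y ∈ pbwSpan K x (I ∩ J) := by
  have monomial : x l * x k = ordMonomial x (Pi.single l 1 + Pi.single k 1) := by
    rw [← ordMonomial_mul_ordMonomial, ordMonomial_single, ordMonomial_single, pow_one, pow_one]
    intro i j hi hj
    rw [Pi.single_apply, ite_ne_right_iff] at hi hj
    exact hi.1 ▸ hj.1 ▸ hlk
  have notMem : Pi.single l 1 + Pi.single k 1 ∉ {m : Fin N → ℕ | Function.support m ⊆ I} ∪
      {m | Function.support m ⊆ J} := by
    rintro (hm | hm)
    · exact hk (hm (by simp))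
    · exact hl (hm (by simp))
  have inter_eq : {m : Fin N → ℕ | Function.support m ⊆ I} ∩ {m | Function.support m ⊆ J} =
      {m | Function.support m ⊆ I ∩ J} :=
    Set.ext fun _ => Set.subset_inter_iff.symm
  rw [pbwSpan, ← inter_eq]
  exact mem_span_image_inter_of_add_eq_smul hx notMem hy hz (monomial ▸ h)

theorem ordMonomial_succ (x : Fin (N + 1) → R) (m : Fin (N + 1) → ℕ) :
    ordMonomial x m =
      ordMonomial (x ∘ Fin.castSucc) (m ∘ Fin.castSucc) * x (Fin.last N) ^ m (Fin.last N) := by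
  simp [ordMonomial, List.finRange_succ_last, Function.comp_def]

theorem ordMonomial_mem_Rsub (x : Fin N → R) (m : Fin N → ℕ) : ordMonomial x m ∈ Rsub K x N := by
  refine Subalgebra.list_prod_mem _ fun z hz => ?_
  obtain ⟨k, _, rfl⟩ := List.mem_map.1 hz
  exact pow_mem (Algebra.subset_adjoin (Set.mem_image_of_mem x k.2)) _

theorem Rsub_comp_castSucc (x : Fin (N + 1) → R) {m : ℕ} (hm : m ≤ N) :
    Rsub K (x ∘ Fin.castSucc) m = Rsub K x m := by
  rw [Rsub, Rsub, Set.image_comp]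
  congr 2
  ext l
  constructor
  · rintro ⟨l, hl, rfl⟩
    exact hl
  · intro hl
    exact ⟨l.castLT (lt_of_lt_of_le hl hm), hl, Fin.castSucc_castLT _ _⟩

theorem linearIndependent_ordMonomial [Nontrivial R] (x : Fin N → R)
    (hx : ∀ k : Fin N, LinearIndependent (Rsub K x k) fun n : ℕ => x k ^ n) :
    LinearIndependent K (ordMonomial x) := by
  induction N with
  | zero => simp [ordMonomial]
  | succ N ih =>
    have init : LinearIndependent K (ordMonomial (x ∘ Fin.castSucc)) :=
      ih _ fun k => by
        rw [Rsub_comp_castSucc x k.2.le]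
        exact hx k.castSucc
    have mem_init (m : Fin N → ℕ) : ordMonomial (x ∘ Fin.castSucc) m ∈ Rsub K x N :=
      Rsub_comp_castSucc (K := K) x le_rfl ▸ ordMonomial_mem_Rsub _ m
    have init_Rsub : LinearIndependent K
        fun m => (⟨ordMonomial (x ∘ Fin.castSucc) m, mem_init m⟩ : Rsub K x N) :=
      LinearIndependent.of_comp (Rsub K x N).val.toLinearMap init
    have split_injective : Function.Injective
        fun m : Fin (N + 1) → ℕ => (m ∘ Fin.castSucc, m (Fin.last N)) := by
      intro m m' h
      ext j
      induction j using Fin.lastCases with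
      | last => exact congrArg Prod.snd h
      | cast i => exact congrFun (congrArg Prod.fst h) i
    convert (linearIndependent_smul init_Rsub (hx (Fin.last N))).comp _ split_injective using 1
    ext m
    exact ordMonomial_succ x m

end Monomials

section Torus

variable {K : Type u} [Field K] {R : Type v} [Ring R] [Algebra K R] {r N : ℕ}
  {act : Torus K r →* (R ≃ₐ[K] R)} {x : Fin N → R}

theorem act_mem_adjoin_image (hx : ∀ k, ∃ f : Fin r → ℤ, IsEigenWith K act f (x k))
    (I : Set (Fin N)) (ξ : Torus K r) {a : R} (ha : a ∈ Algebra.adjoin K (x '' I)) :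
    act ξ a ∈ Algebra.adjoin K (x '' I) := by
  suffices Algebra.adjoin K (x '' I) ≤
      (Algebra.adjoin K (x '' I)).comap (act ξ : R →ₐ[K] R) from this ha
  refine Algebra.adjoin_le ?_
  rintro _ ⟨l, hl, rfl⟩
  obtain ⟨f, hf⟩ := hx l
  change act ξ (x l) ∈ Algebra.adjoin K (x '' I)
  rw [hf ξ]
  exact Subalgebra.smul_mem _ (Algebra.subset_adjoin (Set.mem_image_of_mem x hl)) _

theorem adjoin_image_insert_le_pbwSpan_of_forall_le
    (hx : ∀ k, ∃ f : Fin r → ℤ, IsEigenWith K act f (x k)) {I : Set (Fin N)} {k : Fin N}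
    {ξ : Torus K r} (hI : ∀ i ∈ I, i ≤ k)
    (hδ : ∀ a ∈ Algebra.adjoin K (x '' I),
      x k * a - act ξ a * x k ∈ Algebra.adjoin K (x '' I))
    (ih : Subalgebra.toSubmodule (Algebra.adjoin K (x '' I)) ≤ pbwSpan K x I) :
    Subalgebra.toSubmodule (Algebra.adjoin K (x '' insert k I)) ≤ pbwSpan K x (insert k I) := by
  have mul_le : pbwSpan K x I * pbwSpan K x {k} ≤ pbwSpan K x (insert k I) :=
    Set.union_singleton (s := I) ▸ pbwSpan_mul_pbwSpan_le x (by simpa using hI)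
  rw [Set.image_insert_eq]
  refine (adjoin_insert_le_adjoin_mul_adjoin_singleton fun a ha => ?_).trans
    ((mul_le_mul' ih (adjoin_singleton_le_pbwSpan x k)).trans mul_le)
  rw [← sub_add_cancel (x k * a) (act ξ a * x k)]
  refine add_mem ?_ (Submodule.mul_mem_mul (act_mem_adjoin_image hx I ξ ha)
    (Algebra.self_mem_adjoin_singleton K (x k)))
  exact mul_one (x k * a - act ξ a * x k) ▸ Submodule.mul_mem_mul (hδ a ha)
    (Algebra.adjoin K {x k}).one_mem

theorem adjoin_image_insert_le_pbwSpan_of_forall_ge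
    (hx : ∀ k, ∃ f : Fin r → ℤ, IsEigenWith K act f (x k)) {I : Set (Fin N)} {k : Fin N}
    {ξ : Torus K r} (hI : ∀ i ∈ I, k ≤ i)
    (hδ : ∀ a ∈ Algebra.adjoin K (x '' I),
      x k * a - act ξ a * x k ∈ Algebra.adjoin K (x '' I))
    (ih : Subalgebra.toSubmodule (Algebra.adjoin K (x '' I)) ≤ pbwSpan K x I) :
    Subalgebra.toSubmodule (Algebra.adjoin K (x '' insert k I)) ≤ pbwSpan K x (insert k I) := by
  have mul_le : pbwSpan K x {k} * pbwSpan K x I ≤ pbwSpan K x (insert k I) :=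
    Set.singleton_union (s := I) ▸ pbwSpan_mul_pbwSpan_le x (by simpa using hI)
  rw [Set.image_insert_eq]
  refine (adjoin_insert_le_adjoin_singleton_mul_adjoin fun a ha => ?_).trans
    ((mul_le_mul' (adjoin_singleton_le_pbwSpan x k) ih).trans mul_le)
  -- Moving `x k` to the left uses `a * x k = x k * b - (x k * b - act ξ b * x k)`, `b = act ξ⁻¹ a`.
  have hb : act ξ⁻¹ a ∈ Algebra.adjoin K (x '' I) := act_mem_adjoin_image hx I ξ⁻¹ ha
  have act_b : act ξ (act ξ⁻¹ a) = a := by rw [← AlgEquiv.mul_apply, ← map_mul]; simp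
  have hδb := hδ _ hb
  rw [act_b] at hδb
  rw [← sub_sub_self (x k * act ξ⁻¹ a) (a * x k)]
  refine sub_mem (Submodule.mul_mem_mul (Algebra.self_mem_adjoin_singleton K (x k)) hb) ?_
  exact one_mul (x k * act ξ⁻¹ a - a * x k) ▸ Submodule.mul_mem_mul
    (Algebra.adjoin K {x k}).one_mem hδb

end Torus

section Presentations

variable {K : Type u} [Field K] {R : Type v} [Ring R] [Algebra K R] {r N : ℕ}

theorem ordMonomial_comp_rev (x : Fin N → R) (m : Fin N → ℕ) :
    ordMonomial (x ∘ Fin.rev) m = revOrdMonomial x (m ∘ Fin.rev) := by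
  simp [ordMonomial, revOrdMonomial, List.finRange_reverse, Function.comp_def]

theorem revOrdMonomial_comp_rev (x : Fin N → R) (m : Fin N → ℕ) :
    revOrdMonomial (x ∘ Fin.rev) m = ordMonomial x (m ∘ Fin.rev) := by
  simp [ordMonomial, revOrdMonomial, List.finRange_reverse, Function.comp_def]

theorem Rsub_comp_rev (x : Fin N → R) (k : Fin N) :
    Rsub K (x ∘ Fin.rev) k = RsubRev K x k.rev := by
  have image_Iio : Fin.rev '' Set.Iio k = Set.Ioi k.rev := by
    rw [Set.image_eq_preimage_of_inverse Fin.rev_rev Fin.rev_rev, Fin.preimage_rev_Iio]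
  rw [Rsub, Set.image_comp]
  exact congrArg (fun I => Algebra.adjoin K (x '' I)) image_Iio

theorem RsubRev_comp_rev (x : Fin N → R) (k : Fin N) :
    RsubRev K (x ∘ Fin.rev) k = Rsub K x k.rev := by
  have h := Rsub_comp_rev (K := K) (x ∘ Fin.rev) k.rev
  rw [Fin.rev_rev, Function.comp_assoc, Fin.rev_involutive.comp_self] at h
  exact h.symm

/-- The same algebra presented with its generators in the opposite order, which exchanges the
`h_k` with the `h*_k`. It reduces statements about the `h*_k` to statements about the `h_k`. -/
def SymQNA.reverse (S : SymQNA K R N r) : SymQNA K R N r where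
  x := S.x ∘ Fin.rev
  act := S.act
  h := S.hstar ∘ Fin.rev
  lam := S.lamstar ∘ Fin.rev
  hstar := S.h ∘ Fin.rev
  lamstar := S.lam ∘ Fin.rev
  rational := S.rational
  gen := by rw [Fin.rev_surjective.range_comp, S.gen]
  pbw := by
    rw [funext (ordMonomial_comp_rev S.x)]
    exact S.pbwRev.comp _ Fin.rev_surjective.injective_comp_right
  pbwRev := by
    rw [funext (revOrdMonomial_comp_rev S.x)]
    exact S.pbw.comp _ Fin.rev_surjective.injective_comp_right
  eigenvec k := S.eigenvec k.rev
  stable k := by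
    rw [Rsub_comp_rev]
    exact S.stableRev k.rev
  stableRev k := by
    rw [RsubRev_comp_rev]
    exact S.stable k.rev
  locnil k := by
    rw [Rsub_comp_rev]
    exact S.locnilRev k.rev
  locnilRev k := by
    rw [RsubRev_comp_rev]
    exact S.locnil k.rev
  hx k := S.hxstar k.rev
  hxstar k := S.hx k.rev
  lam_not_root k := S.lamstar_not_root k.rev
  lamstar_not_root k := S.lam_not_root k.rev

theorem QNA.Rsub_le_pbwSpan (Q : QNA K R N r) (k : Fin N) :
    Subalgebra.toSubmodule (Rsub K Q.x k) ≤ pbwSpan K Q.x (Set.Iio k) := by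
  suffices ∀ n ≤ N, Subalgebra.toSubmodule (Rsub K Q.x n) ≤
      pbwSpan K Q.x {l : Fin N | (l : ℕ) < n} from this k k.2.le
  intro n hn
  induction n with
  | zero => exact adjoin_le_of_mul_mem_left (one_mem_pbwSpan Q.x _) (by simp)
  | succ n ih =>
    have insert_eq : {l : Fin N | (l : ℕ) < n + 1} = insert ⟨n, hn⟩ {l : Fin N | (l : ℕ) < n} := by
      ext l
      simp only [Set.mem_ofPred_eq, Set.mem_insert_iff, Fin.ext_iff]
      omega
    rw [Rsub, insert_eq]
    exact adjoin_image_insert_le_pbwSpan_of_forall_le Q.eigenvec (fun i hi => le_of_lt hi)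
      (Q.stable ⟨n, hn⟩) (ih (Nat.le_of_succ_le hn))

theorem SymQNA.RsubRev_le_pbwSpan (S : SymQNA K R N r) (k : Fin N) :
    Subalgebra.toSubmodule (RsubRev K S.x k) ≤ pbwSpan K S.x (Set.Ioi k) := by
  suffices ∀ n ≤ N, Subalgebra.toSubmodule (Algebra.adjoin K (S.x '' {l : Fin N | n ≤ (l : ℕ)})) ≤
      pbwSpan K S.x {l : Fin N | n ≤ (l : ℕ)} from this (k + 1) k.2
  intro n hn
  induction hn using Nat.decreasingInduction with
  | self => exact adjoin_le_of_mul_mem_left (one_mem_pbwSpan S.x _) (by simp [Fin.is_lt])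
  | of_succ n hn ih =>
    have insert_eq : {l : Fin N | n ≤ (l : ℕ)} = insert ⟨n, hn⟩ {l : Fin N | n + 1 ≤ (l : ℕ)} := by
      ext l
      simp only [Set.mem_ofPred_eq, Set.mem_insert_iff, Fin.ext_iff]
      omega
    rw [insert_eq]
    exact adjoin_image_insert_le_pbwSpan_of_forall_ge S.eigenvec (fun i hi => le_of_lt hi)
      (S.stableRev ⟨n, hn⟩) ih

theorem QNA.linearIndependent_pow (Q : QNA K R N r) {k : Fin N} {A : Subalgebra K R}
    (hA : A ≤ Rsub K Q.x k) : LinearIndependent A fun n : ℕ => Q.x k ^ n := by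
  have add_injective : Function.Injective
      fun p : {m : Fin N → ℕ | Function.support m ⊆ Set.Iio k} × ℕ =>
        (p.1 : Fin N → ℕ) + Pi.single k p.2 := by
    have vanish (m : {m : Fin N → ℕ | Function.support m ⊆ Set.Iio k}) : m.1 k = 0 :=
      Function.notMem_support.1 fun hk => lt_irrefl k (m.2 hk)
    rintro ⟨m, n⟩ ⟨m', n'⟩ h
    have hn : n = n' := by simpa [vanish] using congrFun h k
    subst hn
    exact Prod.ext (Subtype.ext (add_right_cancel h)) rfl
  have A_le : Subalgebra.toSubmodule A ≤ pbwSpan K Q.x (Set.Iio k) :=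
    fun _ ha => Q.Rsub_le_pbwSpan k (hA ha)
  refine linearIndependent_subalgebra_of_mul
    (A_le.trans_eq (congrArg _ (Set.image_eq_range _ _))) ?_
  convert Q.pbw.comp _ add_injective using 1
  ext ⟨m, n⟩
  rw [Function.comp_apply, ← ordMonomial_mul_ordMonomial, ordMonomial_single]
  intro i j hi hj
  rw [Pi.single_apply, ite_ne_right_iff] at hj
  exact hj.1 ▸ le_of_lt (m.2 hi)

theorem SymQNA.skewDelta_mem_adjoin_image_Ioo (S : SymQNA K R N r) {l k : Fin N} (hlk : l < k) :
    skewDelta K S.act S.x S.h k (S.x l) ∈ Algebra.adjoin K (S.x '' Set.Ioo l k) := by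
  obtain ⟨f, hf⟩ := S.eigenvec l
  obtain ⟨g, hg⟩ := S.eigenvec k
  let u : Kˣ := ∏ i, S.h k i ^ f i
  let v : Kˣ := ∏ i, S.hstar l i ^ g i
  have lower : skewDelta K S.act S.x S.h k (S.x l) ∈ pbwSpan K S.x (Set.Iio k) :=
    S.Rsub_le_pbwSpan k (S.stable k _ (Algebra.subset_adjoin (Set.mem_image_of_mem S.x hlk)))
  have upper : skewDelta K S.act S.x S.hstar l (S.x k) ∈ pbwSpan K S.x (Set.Ioi l) :=
    S.RsubRev_le_pbwSpan l
      (S.stableRev l _ (Algebra.subset_adjoin (Set.mem_image_of_mem S.x hlk)))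
  have cancel : (v : K) • skewDelta K S.act S.x S.h k (S.x l) +
      skewDelta K S.act S.x S.hstar l (S.x k) = (1 - v * u : K) • (S.x l * S.x k) := by
    rw [skewDelta, skewDelta, hf, hg]
    simp only [smul_sub, smul_mul_assoc, sub_smul, mul_smul, one_smul]
    abel
  refine pbwSpan_le_adjoin S.x _ ((Submodule.smul_mem_iff _ v.ne_zero).1 ?_)
  rw [← Set.Iio_inter_Ioi]
  exact mem_pbwSpan_inter_of_add_eq_smul_mul S.pbw hlk.le Set.self_notMem_Iio Set.self_notMem_Ioi
    (Submodule.smul_mem _ _ lower) upper cancel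

theorem InXi.Ioo_subset_image_Iio {τ : Equiv.Perm (Fin N)} (hτ : InXi τ) {l k : Fin N}
    (hlk : l ≤ k) : Set.Ioo (τ l) (τ k) ⊆ τ '' Set.Iio k := by
  rintro j ⟨hlj, hjk⟩
  obtain ⟨c, hc, rfl⟩ := hτ k l k hlk le_rfl j hlj.le hjk.le
  exact ⟨c, hc.lt_of_ne (by rintro rfl; exact hjk.false), rfl⟩

theorem InXi.lt_of_not_xiCaseMax {τ : Equiv.Perm (Fin N)} (hτ : InXi τ) {l k : Fin N}
    (hk : ¬ XiCaseMax τ k) (hlk : l < k) : τ k < τ l := by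
  rw [XiCaseMax] at hk
  push Not at hk
  obtain ⟨b, hbk, hb⟩ := hk
  by_contra! hl
  obtain ⟨c, hc, hck⟩ := hτ (max l b) l b (le_max_left l b) (le_max_right l b) (τ k) hl hb
  exact (max_lt hlk hbk).not_ge (τ.injective hck ▸ hc)

theorem InXi.trans_revPerm {τ : Equiv.Perm (Fin N)} (hτ : InXi τ) :
    InXi (τ.trans Fin.revPerm) := by
  intro k a b ha hb j haj hjb
  obtain ⟨c, hc, hcj⟩ := hτ k b a hb ha j.rev (Fin.le_rev_iff.1 hjb) (Fin.rev_le_iff.1 haj)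
  exact ⟨c, hc, by simp [hcj]⟩

theorem InXi.xiCaseMax_trans_revPerm {τ : Equiv.Perm (Fin N)} (hτ : InXi τ) {k : Fin N}
    (hk : ¬ XiCaseMax τ k) : XiCaseMax (τ.trans Fin.revPerm) k :=
  fun _ hlk => Fin.rev_lt_rev.2 (hτ.lt_of_not_xiCaseMax hk hlk)

/-- The conditions on the `k`-th step of a quantum nilpotent algebra presentation, with torus
element `ξ` and eigenvalue `μ`. That the step is a skew polynomial extension is encoded by the
linear independence of the powers of `x k` over the subalgebra generated by the preceding
generators, so that it can be checked one step at a time. -/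
structure IsQNAStep (act : Torus K r →* (R ≃ₐ[K] R)) (x : Fin N → R) (k : Fin N)
    (ξ : Torus K r) (μ : K) : Prop where
  stable : ∀ a ∈ Rsub K x k, x k * a - act ξ a * x k ∈ Rsub K x k
  locnil : ∀ a ∈ Rsub K x k, ∃ n : ℕ, (fun b => x k * b - act ξ b * x k)^[n] a = 0
  linearIndependent_pow : LinearIndependent (Rsub K x k) fun n : ℕ => x k ^ n
  act_eq_smul : act ξ (x k) = μ • x k
  not_root : ∀ n : ℕ, n ≠ 0 → μ ^ n ≠ 1

/-- The quantum nilpotent algebra assembled from its individual steps. -/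
def QNA.ofSteps [Nontrivial R] (x : Fin N → R) (act : Torus K r →* (R ≃ₐ[K] R))
    (h : Fin N → Torus K r) (lam : Fin N → K) (rational : IsRationalAction K act)
    (gen : Algebra.adjoin K (Set.range x) = ⊤)
    (eigenvec : ∀ k, ∃ f : Fin r → ℤ, IsEigenWith K act f (x k))
    (step : ∀ k, IsQNAStep act x k (h k) (lam k)) : QNA K R N r where
  x := x
  act := act
  h := h
  lam := lam
  rational := rational
  gen := gen
  pbw := linearIndependent_ordMonomial x fun k => (step k).linearIndependent_pow
  eigenvec := eigenvec
  stable k := (step k).stable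
  locnil k := (step k).locnil
  hx k := (step k).act_eq_smul
  lam_not_root k := (step k).not_root

theorem SymQNA.isQNAStep_of_xiCaseMax (S : SymQNA K R N r) {τ : Equiv.Perm (Fin N)}
    (hτ : InXi τ) {k : Fin N} (hk : XiCaseMax τ k) :
    IsQNAStep S.act (S.x ∘ τ) k (S.h (τ k)) (S.lam (τ k)) := by
  have Rsub_eq : Rsub K (S.x ∘ τ) k = Algebra.adjoin K (S.x '' (τ '' Set.Iio k)) := by
    rw [Rsub, Set.image_comp]
    rfl
  have le : Algebra.adjoin K (S.x '' (τ '' Set.Iio k)) ≤ Rsub K S.x (τ k) :=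
    Algebra.adjoin_mono (Set.image_mono (Set.image_subset_iff.2 hk))
  refine ⟨Rsub_eq ▸ ?_, Rsub_eq ▸ ?_, Rsub_eq ▸ S.linearIndependent_pow le, S.hx _,
    S.lam_not_root _⟩
  · refine fun a => mul_sub_map_mul_mem_adjoin (σ := (S.act (S.h (τ k)) : R →ₐ[K] R))
      (fun a => act_mem_adjoin_image S.eigenvec _ _) ?_
    rintro _ ⟨_, ⟨l, hl, rfl⟩, rfl⟩
    exact Algebra.adjoin_mono (Set.image_mono (hτ.Ioo_subset_image_Iio (le_of_lt hl)))
      (S.skewDelta_mem_adjoin_image_Ioo (hk l hl))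
  · exact fun a ha => S.locnil (τ k) a (le ha)

theorem SymQNA.isQNAStep_of_not_xiCaseMax (S : SymQNA K R N r) {τ : Equiv.Perm (Fin N)}
    (hτ : InXi τ) {k : Fin N} (hk : ¬ XiCaseMax τ k) :
    IsQNAStep S.act (S.x ∘ τ) k (S.hstar (τ k)) (S.lamstar (τ k)) := by
  simpa [SymQNA.reverse, Function.comp_def] using
    S.reverse.isQNAStep_of_xiCaseMax hτ.trans_revPerm (hτ.xiCaseMax_trans_revPerm hk)

end Presentations

/-- **The presentations of a symmetric quantum nilpotent algebra associated to `τ ∈ Ξ_N`.**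
Let `R` be a symmetric quantum nilpotent algebra of dimension `N` and `τ ∈ Ξ_N`.  Then
`R` has an iterated skew polynomial presentation with generators in the order
`x_{τ(1)}, …, x_{τ(N)}` satisfying the quantum nilpotent algebra axioms (a)–(c) with
respect to the same torus action, where at the `k`-th step the torus element is
`h''_{τ(k)} = h_{τ(k)}` if `τ(k) = max τ([1,k-1]) + 1`, and `h''_{τ(k)} = h*_{τ(k)}` if
`τ(k) = min τ([1,k-1]) − 1` (with the corresponding eigenvalues `λ_{τ(k)}`, `λ*_{τ(k)}`). -/
theorem tau_presentation_of_symQNA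
    {K : Type u} [Field K] {R : Type v} [Ring R] [Algebra K R] {N r : ℕ}
    (S : SymQNA K R N r) (τ : Equiv.Perm (Fin N)) (hτ : InXi τ) :
    ∃ Qτ : QNA K R N r,
      Qτ.x = (fun k => S.x (τ k)) ∧
      Qτ.act = S.act ∧
      (∀ k : Fin N, 0 < (k : ℕ) →
        (XiCaseMax τ k → Qτ.h k = S.h (τ k) ∧ Qτ.lam k = S.lam (τ k)) ∧
        (¬ XiCaseMax τ k → Qτ.h k = S.hstar (τ k) ∧ Qτ.lam k = S.lamstar (τ k))) := by
  classical
  have : Nontrivial R := nontrivial_of_ne _ _ (S.pbw.ne_zero 0)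
  have gen : Algebra.adjoin K (Set.range (S.x ∘ τ)) = ⊤ := by
    rw [τ.surjective.range_comp, S.gen]
  have step (k : Fin N) : IsQNAStep S.act (S.x ∘ τ) k
      (if XiCaseMax τ k then S.h (τ k) else S.hstar (τ k))
      (if XiCaseMax τ k then S.lam (τ k) else S.lamstar (τ k)) := by
    split_ifs with hk
    · exact S.isQNAStep_of_xiCaseMax hτ hk
    · exact S.isQNAStep_of_not_xiCaseMax hτ hk
  exact ⟨QNA.ofSteps (S.x ∘ τ) S.act _ _ S.rational gen (fun k => S.eigenvec (τ k)) step,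
    rfl, rfl, fun k _ => ⟨fun hk => ⟨if_pos hk, if_pos hk⟩, fun hk => ⟨if_neg hk, if_neg hk⟩⟩⟩
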